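/- Let B be a bivector in ℝ_{p,q,r} for which μ ≠ 0 is an eigenvalue with paired eigenvectors v₊, v₋ (eigenvalues ±μ, v₊ · v₋ ≠ 0), set B_μ := B/μ and β_μ := (v₊ ∧ v₋)/(v₊ · v₋). Then for all relevant indices j, the wedge powers W_i of B_μ satisfy W_{2j+1} = ⟨β_μ (W_{2j} + W_{2j+2})⟩_{4j+2} = β_μ ∧ W_{2j} + β_μ · W_{2j+2}; consequently si∧(B_μ) = β_μ co∧(B_μ). -/

import Mathlib

/-! Common setup: the real geometric algebra `ℝ_{p,q,r}`, grade projections `⟨·⟩_ℓ`,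
the commutator product `×`, the wedge powers `W_j`, the outer exponential and outer
trigonometric functions, the characteristic polynomial data `M_μ`, and the
complexification `ℂ ⊗ ℝ_{p,q,r}`. -/

noncomputable section

open CliffordAlgebra TensorProduct

/-- The diagonal quadratic form of signature `(p,q,r)` on `ℝⁿ`, `n = p+q+r`:
`p` basis vectors of square `+1`, `q` of square `-1`, `r` of square `0`.
`ℝ_{p,q,r} := CliffordAlgebra (sigQ p q r)`. -/
def sigQ (p q r : ℕ) : QuadraticForm ℝ (Fin (p + q + r) → ℝ) :=
  QuadraticMap.weightedSumSquares ℝ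
    (fun i : Fin (p + q + r) => if (i : ℕ) < p then (1 : ℝ) else if (i : ℕ) < p + q then -1 else 0)

variable {K : Type*} [Field K] [CharZero K] {M : Type*} [AddCommGroup M] [Module K M]

/-- The grade-`ℓ` component `⟨x⟩_ℓ` of an element of a Clifford algebra, obtained by
transporting the grading of the exterior algebra along `CliffordAlgebra.equivExterior`. -/
def gradeProj (Q : QuadraticForm K M) (ℓ : ℕ) (x : CliffordAlgebra Q) : CliffordAlgebra Q :=
  letI : Invertible (2 : K) := invertibleOfNonzero two_ne_zero
  (equivExterior Q).symm
    (DirectSum.decompose (fun n : ℕ => ⋀[K]^n M) (equivExterior Q x) ℓ : ExteriorAlgebra K M)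

/-- `x` is homogeneous of grade `ℓ`; in particular `IsGrade Q 2 B` says `B` is a bivector. -/
def IsGrade (Q : QuadraticForm K M) (ℓ : ℕ) (x : CliffordAlgebra Q) : Prop :=
  gradeProj Q ℓ x = x

/-- The commutator product `x × y := (xy - yx)/2`. -/
def cprod {Q : QuadraticForm K M} (x y : CliffordAlgebra Q) : CliffordAlgebra Q :=
  (2 : K)⁻¹ • (x * y - y * x)

/-- `W_j := (1/j!) ⟨B^j⟩_{2j}`, the normalized `j`-fold wedge power of `B`. -/
def Wj (Q : QuadraticForm K M) (B : CliffordAlgebra Q) (j : ℕ) : CliffordAlgebra Q :=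
  ((j.factorial : K)⁻¹) • gradeProj Q (2 * j) (B ^ j)

/-- `B` has effective dimension `2k`: `k` is the largest integer with `W_k ≠ 0`. -/
def HasEffDim (Q : QuadraticForm K M) (B : CliffordAlgebra Q) (k : ℕ) : Prop :=
  Wj Q B k ≠ 0 ∧ ∀ j, k < j → Wj Q B j = 0

/-- The outer exponential `Λ^B = Σ_{j≥0} W_j`; `n` is any bound beyond which all the `W_j`
vanish (e.g. the dimension of the underlying space), so the sum is complete. -/
def outerExp (Q : QuadraticForm K M) (n : ℕ) (B : CliffordAlgebra Q) : CliffordAlgebra Q :=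
  ∑ j ∈ Finset.range (n + 1), Wj Q B j

/-- The outer cosine `co∧(B) := (Λ^B + Λ^{-B})/2`. -/
def coW (Q : QuadraticForm K M) (n : ℕ) (B : CliffordAlgebra Q) : CliffordAlgebra Q :=
  (2 : K)⁻¹ • (outerExp Q n B + outerExp Q n (-B))

/-- The outer sine `si∧(B) := (Λ^B - Λ^{-B})/2`. -/
def siW (Q : QuadraticForm K M) (n : ℕ) (B : CliffordAlgebra Q) : CliffordAlgebra Q :=
  (2 : K)⁻¹ • (outerExp Q n B - outerExp Q n (-B))

/-- `M_μ := Σ_{j=0}^k (-μ)^{k-j} W_j`; the characteristic polynomial of `B` is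
`P_{2k}(μ) = M_μ * reverse M_μ`. -/
def Mpoly (Q : QuadraticForm K M) (B : CliffordAlgebra Q) (k : ℕ) (μ : K) : CliffordAlgebra Q :=
  ∑ j ∈ Finset.range (k + 1), (-μ) ^ (k - j) • Wj Q B j

/-- The wedge (outer) product, `X ∧ Y := ⟨XY⟩_{i+j}` on homogeneous elements of grades `i`, `j`,
extended bilinearly; `n` bounds the occurring grades. -/
def wedgeProd (Q : QuadraticForm K M) (n : ℕ) (x y : CliffordAlgebra Q) : CliffordAlgebra Q :=
  ∑ i ∈ Finset.range (n + 1), ∑ j ∈ Finset.range (n + 1),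
    gradeProj Q (i + j) (gradeProj Q i x * gradeProj Q j y)

/-- The dot product of two vectors, `u · v = ⟨uv⟩₀ = polar(Q)(u,v)/2`, as a scalar. -/
def vdot (Q : QuadraticForm K M) (u v : M) : K := (2 : K)⁻¹ * QuadraticMap.polar Q u v

/-- The complexified quadratic form of signature `(p,q,r)`. -/
def sigQc (p q r : ℕ) : QuadraticForm ℂ (ℂ ⊗[ℝ] (Fin (p + q + r) → ℝ)) :=
  letI : Invertible (2 : ℝ) := invertibleOfNonzero two_ne_zero
  (sigQ p q r).baseChange ℂ

/-- The canonical embedding of `ℝ_{p,q,r}` into its complexification `ℂ ⊗ ℝ_{p,q,r}`. -/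
def toC (p q r : ℕ) (x : CliffordAlgebra (sigQ p q r)) : CliffordAlgebra (sigQc p q r) :=
  letI : Invertible (2 : ℝ) := invertibleOfNonzero two_ne_zero
  ofBaseChange ℂ (sigQ p q r) ((1 : ℂ) ⊗ₜ x)

/-- `v` is an eigenvector of the bivector `B` with eigenvalue `μ`: `v ≠ 0` and `B × v = μ v`. -/
def IsEigen (Q : QuadraticForm K M) (B : CliffordAlgebra Q) (μ : K) (v : M) : Prop :=
  v ≠ 0 ∧ cprod B (ι Q v) = μ • ι Q v

end

section helpers

set_option linter.unusedSectionVars false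
set_option linter.style.haveILetI false

open CliffordAlgebra TensorProduct

variable {K : Type*} [Field K] [CharZero K] {M : Type*} [AddCommGroup M] [Module K M]

/-- The linear equivalence with the exterior algebra. -/
noncomputable def extE (Q : QuadraticForm K M) : CliffordAlgebra Q ≃ₗ[K] ExteriorAlgebra K M :=
  letI : Invertible (2 : K) := invertibleOfNonzero two_ne_zero
  equivExterior Q

/-- The vector `v` as a functional. -/
noncomputable def dualV (Q : QuadraticForm K M) : M →ₗ[K] Module.Dual K M :=
  letI : Invertible (2 : K) := invertibleOfNonzero two_ne_zero
  QuadraticMap.associated (R := K) (M := M) Q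

/-- Contraction on the exterior algebra. -/
noncomputable def conE (d : Module.Dual K M) : ExteriorAlgebra K M →ₗ[K] ExteriorAlgebra K M :=
  contractLeft (Q := (0 : QuadraticForm K M)) d

theorem conE_ι_mul (d : Module.Dual K M) (a : M) (b : ExteriorAlgebra K M) :
    conE d (ExteriorAlgebra.ι K a * b) = d a • b - ExteriorAlgebra.ι K a * conE d b :=
  contractLeft_ι_mul (Q := (0 : QuadraticForm K M)) d a b

theorem conE_ι (d : Module.Dual K M) (a : M) :
    conE d (ExteriorAlgebra.ι K a) = algebraMap K _ (d a) :=
  contractLeft_ι (Q := (0 : QuadraticForm K M)) d a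

theorem conE_algebraMap (d : Module.Dual K M) (a : K) :
    conE d (algebraMap K (ExteriorAlgebra K M) a) = 0 :=
  contractLeft_algebraMap (Q := (0 : QuadraticForm K M)) d a

theorem conE_one (d : Module.Dual K M) :
    conE d (1 : ExteriorAlgebra K M) = 0 :=
  contractLeft_one (Q := (0 : QuadraticForm K M)) d

theorem dualV_apply (Q : QuadraticForm K M) (u v : M) : dualV Q u v = vdot Q u v := by
  simp [dualV, vdot, QuadraticMap.associated_apply, QuadraticMap.polar]

theorem extE_ι_mul (Q : QuadraticForm K M) (v : M) (x : CliffordAlgebra Q) :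
    extE Q (ι Q v * x) = ExteriorAlgebra.ι K v * extE Q x + conE (dualV Q v) (extE Q x) := by
  letI : Invertible (2 : K) := invertibleOfNonzero two_ne_zero
  have := changeForm_ι_mul (Q := Q) (changeForm.associated_neg_proof (Q := Q)) v x
  have h2 : conE (dualV Q v) (extE Q x) =
    - contractLeft (Q := (0 : QuadraticForm K M)) (QuadraticMap.associated (R := K) (M := M) (-Q) v)
      (extE Q x) := by
    simp [conE, dualV]
  rw [h2, ← sub_eq_add_neg]
  exact this

theorem extE_ι (Q : QuadraticForm K M) (v : M) : extE Q (ι Q v) = ExteriorAlgebra.ι K v := by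
  letI : Invertible (2 : K) := invertibleOfNonzero two_ne_zero
  exact changeForm_ι (Q := Q) (changeForm.associated_neg_proof (Q := Q)) v

theorem extE_algebraMap (Q : QuadraticForm K M) (a : K) :
    extE Q (algebraMap K _ a) = algebraMap K _ a := by
  letI : Invertible (2 : K) := invertibleOfNonzero two_ne_zero
  exact changeForm_algebraMap (Q := Q) (changeForm.associated_neg_proof (Q := Q)) a

theorem extE_one (Q : QuadraticForm K M) : extE Q 1 = 1 := by
  simpa using extE_algebraMap Q 1

theorem extE_ι_mul_ι (Q : QuadraticForm K M) (u v : M) :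
    extE Q (ι Q u * ι Q v) = ExteriorAlgebra.ι K u * ExteriorAlgebra.ι K v
      + algebraMap K _ (vdot Q u v) := by
  rw [extE_ι_mul, extE_ι, conE_ι, dualV_apply]

/-- Grade projection in the exterior algebra. -/
noncomputable def prE (l : ℕ) : ExteriorAlgebra K M →ₗ[K] ExteriorAlgebra K M :=
  GradedAlgebra.proj (fun n : ℕ => ⋀[K]^n M) l

theorem prE_of_mem {l : ℕ} {x : ExteriorAlgebra K M} (h : x ∈ ⋀[K]^l M) : prE l x = x :=
  DirectSum.decompose_of_mem_same (fun n : ℕ => ⋀[K]^n M) h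

theorem prE_of_mem_ne {l m : ℕ} {x : ExteriorAlgebra K M} (h : x ∈ ⋀[K]^m M) (hne : m ≠ l) :
    prE l x = 0 :=
  DirectSum.decompose_of_mem_ne (fun n : ℕ => ⋀[K]^n M) h hne

theorem prE_mem (l : ℕ) (x : ExteriorAlgebra K M) : prE l x ∈ ⋀[K]^l M :=
  SetLike.coe_mem (DirectSum.decompose (fun n : ℕ => ⋀[K]^n M) x l)

theorem extE_gradeProj (Q : QuadraticForm K M) (l : ℕ) (x : CliffordAlgebra Q) :
    extE Q (gradeProj Q l x) = prE l (extE Q x) :=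
  (extE Q).apply_symm_apply _

theorem gradeProj_eq (Q : QuadraticForm K M) (l : ℕ) (x : CliffordAlgebra Q) :
    gradeProj Q l x = ((extE Q).symm.toLinearMap ∘ₗ prE l ∘ₗ (extE Q).toLinearMap) x := rfl

theorem ι_memE (v : M) : ExteriorAlgebra.ι K v ∈ ⋀[K]^1 M := by
  rw [ExteriorAlgebra.exteriorPower, pow_one]; exact ⟨v, rfl⟩

theorem mul_memE {a b : ℕ} {x y : ExteriorAlgebra K M} (hx : x ∈ ⋀[K]^a M) (hy : y ∈ ⋀[K]^b M) :
    x * y ∈ ⋀[K]^(a + b) M := SetLike.mul_mem_graded (A := fun n : ℕ => ⋀[K]^n M) hx hy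

theorem ι_mul_memE {b : ℕ} (v : M) {y : ExteriorAlgebra K M} (hy : y ∈ ⋀[K]^b M) :
    ExteriorAlgebra.ι K v * y ∈ ⋀[K]^(b + 1) M := by
  rw [add_comm]; exact mul_memE (ι_memE v) hy

theorem algebraMap_memE (a : K) : algebraMap K (ExteriorAlgebra K M) a ∈ ⋀[K]^0 M :=
  SetLike.algebraMap_mem_graded (fun n : ℕ => ⋀[K]^n M) a

theorem pow_memE {a : ℕ} {x : ExteriorAlgebra K M} (hx : x ∈ ⋀[K]^a M) (n : ℕ) :
    x ^ n ∈ ⋀[K]^(a * n) M := by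
  rw [mul_comm]
  exact SetLike.pow_mem_graded (A := fun n : ℕ => ⋀[K]^n M) n hx

theorem conE_memE_aux (d : Module.Dual K M) (m : ℕ) : ∀ x ∈ ⋀[K]^m M,
    (m = 0 → conE d x = 0) ∧ conE d x ∈ ⋀[K]^(m - 1) M := by
  intro x hx
  induction hx using Submodule.pow_induction_on_left' with
  | algebraMap r => rw [conE_algebraMap]; simp
  | add x y i hx hy ihx ihy =>
    rw [map_add]
    exact ⟨fun h => by rw [ihx.1 h, ihy.1 h, add_zero], add_mem ihx.2 ihy.2⟩
  | mem_mul u hu i x hx ih =>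
    obtain ⟨u, rfl⟩ := hu
    rw [conE_ι_mul]
    refine ⟨fun h => by simp at h, ?_⟩
    refine sub_mem (Submodule.smul_mem _ _ hx) ?_
    rcases Nat.eq_zero_or_pos i with rfl | hi
    · rw [ih.1 rfl, mul_zero]; exact zero_mem _
    · have := ι_mul_memE u ih.2
      rwa [show i - 1 + 1 = i by omega] at this

theorem conE_memE (d : Module.Dual K M) {m : ℕ} {x : ExteriorAlgebra K M} (hx : x ∈ ⋀[K]^m M) :
    conE d x ∈ ⋀[K]^(m - 1) M := (conE_memE_aux d m x hx).2

theorem conE_memE_zero (d : Module.Dual K M) {x : ExteriorAlgebra K M} (hx : x ∈ ⋀[K]^0 M) :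
    conE d x = 0 := (conE_memE_aux d 0 x hx).1 rfl

theorem ι_mul_conE_memE (v : M) (d : Module.Dual K M) {m : ℕ} {x : ExteriorAlgebra K M}
    (hx : x ∈ ⋀[K]^m M) :
    ExteriorAlgebra.ι K v * conE d x ∈ ⋀[K]^m M := by
  rcases Nat.eq_zero_or_pos m with rfl | hi
  · rw [conE_memE_zero d hx, mul_zero]; exact zero_mem _
  · have := ι_mul_memE v (conE_memE d hx)
    rwa [show m - 1 + 1 = m by omega] at this

theorem ι_antiE (u v : M) : ExteriorAlgebra.ι K u * ExteriorAlgebra.ι K v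
    = - (ExteriorAlgebra.ι K v * ExteriorAlgebra.ι K u) :=
  eq_neg_of_add_eq_zero_left (ExteriorAlgebra.ι_add_mul_swap u v)

/-- Bivectors: span of commutators. -/
def bivS (Q : QuadraticForm K M) : Submodule K (CliffordAlgebra Q) :=
  Submodule.span K {x | ∃ u w : M, x = ι Q u * ι Q w - ι Q w * ι Q u}

theorem vdot_comm (Q : QuadraticForm K M) (u v : M) : vdot Q u v = vdot Q v u := by
  simp [vdot, QuadraticMap.polar_comm]

theorem extE_comm (Q : QuadraticForm K M) (u w : M) :
    extE Q (ι Q u * ι Q w - ι Q w * ι Q u)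
      = (2 : K) • (ExteriorAlgebra.ι K u * ExteriorAlgebra.ι K w) := by
  rw [map_sub, extE_ι_mul_ι, extE_ι_mul_ι, vdot_comm Q w u, ι_antiE w u, two_smul]
  abel

theorem wedge_memE (u w : M) :
    ExteriorAlgebra.ι K u * ExteriorAlgebra.ι K w ∈ ⋀[K]^2 M :=
  mul_memE (ι_memE u) (ι_memE w)

theorem bivS_memE {Q : QuadraticForm K M} {x : CliffordAlgebra Q} (hx : x ∈ bivS Q) :
    extE Q x ∈ ⋀[K]^2 M := by
  induction hx using Submodule.span_induction with
  | mem x hx => obtain ⟨u, w, rfl⟩ := hx; rw [extE_comm]; exact Submodule.smul_mem _ _ (wedge_memE _ _)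
  | zero => rw [map_zero]; exact zero_mem _
  | add x y _ _ hx hy => rw [map_add]; exact add_mem hx hy
  | smul a x _ hx => rw [map_smul]; exact Submodule.smul_mem _ _ hx

theorem mem_bivS_of_extE (Q : QuadraticForm K M) {y : ExteriorAlgebra K M} (hy : y ∈ ⋀[K]^2 M) :
    (extE Q).symm y ∈ bivS Q := by
  rw [ExteriorAlgebra.exteriorPower, pow_two] at hy
  induction hy using Submodule.mul_induction_on' with
  | mem_mul_mem m hm n hn =>
    obtain ⟨u, rfl⟩ := hm
    obtain ⟨w, rfl⟩ := hn
    have : (extE Q).symm (ExteriorAlgebra.ι K u * ExteriorAlgebra.ι K w)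
      = (2 : K)⁻¹ • (ι Q u * ι Q w - ι Q w * ι Q u) := by
      rw [LinearEquiv.symm_apply_eq, map_smul, extE_comm, smul_smul]
      simp
    rw [this]
    exact Submodule.smul_mem _ _ (Submodule.subset_span ⟨u, w, rfl⟩)
  | add x _ y _ hx hy => rw [map_add]; exact add_mem hx hy

theorem isGrade_two_mem {Q : QuadraticForm K M} {x : CliffordAlgebra Q} (hx : IsGrade Q 2 x) :
    x ∈ bivS Q := by
  have := mem_bivS_of_extE Q (prE_mem 2 (extE Q x))
  rwa [show (extE Q).symm (prE 2 (extE Q x)) = x from hx] at this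

theorem toC_mem {p q r : ℕ} {x : CliffordAlgebra (sigQ p q r)} (hx : x ∈ bivS (sigQ p q r)) :
    toC p q r x ∈ bivS (sigQc p q r) := by
  letI : Invertible (2 : ℝ) := invertibleOfNonzero two_ne_zero
  have hι : ∀ v, ofBaseChange ℂ (sigQ p q r) ((1 : ℂ) ⊗ₜ ι _ v) = ι (sigQc p q r) ((1 : ℂ) ⊗ₜ v) :=
    fun v => ofBaseChange_tmul_ι _ _ _ _
  have hmul : ∀ x y, ofBaseChange ℂ (sigQ p q r) ((1 : ℂ) ⊗ₜ (x * y))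
      = ofBaseChange ℂ (sigQ p q r) ((1 : ℂ) ⊗ₜ x) * ofBaseChange ℂ (sigQ p q r) ((1 : ℂ) ⊗ₜ y) := by
    intro x y
    rw [← map_mul, Algebra.TensorProduct.tmul_mul_tmul, one_mul]
  unfold toC
  induction hx using Submodule.span_induction with
  | mem x hx =>
    obtain ⟨u, w, rfl⟩ := hx
    rw [TensorProduct.tmul_sub, map_sub, hmul, hmul, hι, hι]
    exact Submodule.subset_span ⟨_, _, rfl⟩
  | zero => rw [TensorProduct.tmul_zero, map_zero]; exact zero_mem _
  | add x y _ _ hx hy => rw [TensorProduct.tmul_add, map_add]; exact add_mem hx hy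
  | smul a x _ hx =>
    have : (1 : ℂ) ⊗ₜ[ℝ] (a • x) = (a : ℂ) • ((1 : ℂ) ⊗ₜ[ℝ] x) := by
      rw [← TensorProduct.smul_tmul, TensorProduct.smul_tmul']
      simp
    rw [this, map_smul]
    exact Submodule.smul_mem _ _ hx

/-- commutation of a vector and a bivector -/
theorem ι_commE (v : M) {c : ExteriorAlgebra K M} (hc : c ∈ ⋀[K]^2 M) :
    ExteriorAlgebra.ι K v * c = c * ExteriorAlgebra.ι K v := by
  rw [ExteriorAlgebra.exteriorPower, pow_two] at hc
  induction hc using Submodule.mul_induction_on' with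
  | mem_mul_mem m hm n hn =>
    obtain ⟨u, rfl⟩ := hm
    obtain ⟨w, rfl⟩ := hn
    rw [← mul_assoc, ι_antiE v u, neg_mul, mul_assoc, ι_antiE v w, mul_neg, neg_neg, mul_assoc]
  | add x _ y _ hx hy => rw [mul_add, add_mul, hx, hy]

theorem conE_biv_mul (d : Module.Dual K M) {c : ExteriorAlgebra K M} (hc : c ∈ ⋀[K]^2 M)
    (x : ExteriorAlgebra K M) :
    conE d (c * x) = conE d c * x + c * conE d x := by
  rw [ExteriorAlgebra.exteriorPower, pow_two] at hc
  induction hc using Submodule.mul_induction_on' with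
  | mem_mul_mem m hm n hn =>
    obtain ⟨u, rfl⟩ := hm
    obtain ⟨w, rfl⟩ := hn
    rw [mul_assoc, conE_ι_mul, conE_ι_mul, conE_ι_mul, conE_ι]
    simp only [Algebra.algebraMap_eq_smul_one, mul_sub, sub_mul, mul_assoc, smul_mul_assoc,
      mul_smul_comm, one_mul, mul_one]
    abel
  | add y _ z _ hx hy => simp only [add_mul, map_add, hx, hy]; abel

theorem conE_pow (d : Module.Dual K M) (v : M) {c : ExteriorAlgebra K M} (hc : c ∈ ⋀[K]^2 M)
    (h : conE d c = - ExteriorAlgebra.ι K v) (n : ℕ) :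
    conE d (c ^ (n + 1)) = -((n + 1 : ℕ) : K) • (ExteriorAlgebra.ι K v * c ^ n) := by
  induction n with
  | zero => simp [h]
  | succ n ih =>
    rw [pow_succ', conE_biv_mul d hc, ih, h, mul_smul_comm, ← mul_assoc c, ← ι_commE v hc,
      mul_assoc, ← pow_succ']
    push_cast
    rw [neg_mul]
    module

/-- Structure of the product of a bivector and a homogeneous element. -/
theorem biv_mul (Q : QuadraticForm K M) {C : CliffordAlgebra Q} (hC : C ∈ bivS Q)
    {m : ℕ} {y : CliffordAlgebra Q} (hy : extE Q y ∈ ⋀[K]^m M) :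
    ∃ a ∈ ⋀[K]^m M, ∃ b ∈ ⋀[K]^(m - 2) M, extE Q (C * y) = extE Q C * extE Q y + a + b := by
  induction hC using Submodule.span_induction with
  | zero => exact ⟨0, zero_mem _, 0, zero_mem _, by simp⟩
  | add x z _ _ hx hz =>
    obtain ⟨a, ha, b, hb, h⟩ := hx
    obtain ⟨a', ha', b', hb', h'⟩ := hz
    refine ⟨a + a', add_mem ha ha', b + b', add_mem hb hb', ?_⟩
    rw [add_mul, map_add, h, h', map_add, add_mul]
    abel
  | smul t x _ hx =>
    obtain ⟨a, ha, b, hb, h⟩ := hx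
    refine ⟨t • a, Submodule.smul_mem _ _ ha, t • b, Submodule.smul_mem _ _ hb, ?_⟩
    rw [smul_mul_assoc, map_smul, h, map_smul, smul_mul_assoc, smul_add, smul_add]
  | mem x hx =>
    obtain ⟨u, w, rfl⟩ := hx
    have key : ∀ u w : M, ∃ a ∈ ⋀[K]^m M, ∃ b ∈ ⋀[K]^(m - 2) M, extE Q (ι Q u * ι Q w * y)
        = ExteriorAlgebra.ι K u * ExteriorAlgebra.ι K w * extE Q y + a + b := by
      intro u w
      refine ⟨ExteriorAlgebra.ι K u * conE (dualV Q w) (extE Q y) +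
        conE (dualV Q u) (ExteriorAlgebra.ι K w * extE Q y), add_mem (ι_mul_conE_memE _ _ hy) ?_,
        conE (dualV Q u) (conE (dualV Q w) (extE Q y)), ?_, ?_⟩
      · exact conE_memE _ (ι_mul_memE w hy)
      · exact conE_memE _ (conE_memE _ hy)
      · rw [mul_assoc, extE_ι_mul, extE_ι_mul, map_add, mul_add, mul_assoc]
        abel
    obtain ⟨a, ha, b, hb, h⟩ := key u w
    obtain ⟨a', ha', b', hb', h'⟩ := key w u
    refine ⟨a - a', sub_mem ha ha', b - b', sub_mem hb hb', ?_⟩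
    rw [sub_mul, map_sub, h, h', extE_comm, ι_antiE w u, two_smul, add_mul, neg_mul]
    abel

/-- Elements of grade less than `n`. -/
def lowS (K M : Type*) [Field K] [AddCommGroup M] [Module K M] (n : ℕ) :
    Submodule K (ExteriorAlgebra K M) :=
  Submodule.span K {x | ∃ l < n, x ∈ ⋀[K]^l M}

theorem lowS_of_mem {l n : ℕ} (h : l < n) {x : ExteriorAlgebra K M} (hx : x ∈ ⋀[K]^l M) :
    x ∈ lowS K M n := Submodule.subset_span ⟨l, h, hx⟩

theorem prE_lowS {n : ℕ} {x : ExteriorAlgebra K M} (hx : x ∈ lowS K M n) {l : ℕ} (h : n ≤ l) :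
    prE l x = 0 := by
  induction hx using Submodule.span_induction with
  | mem x hx => obtain ⟨m, hm, hx⟩ := hx; exact prE_of_mem_ne hx (by omega)
  | zero => rw [map_zero]
  | add x y _ _ hx hy => rw [map_add, hx, hy, add_zero]
  | smul a x _ hx => rw [map_smul, hx, smul_zero]

theorem biv_mul_lowS (Q : QuadraticForm K M) {C : CliffordAlgebra Q} (hC : C ∈ bivS Q)
    {n : ℕ} {z : ExteriorAlgebra K M} (hz : z ∈ lowS K M n) :
    extE Q (C * (extE Q).symm z) ∈ lowS K M (n + 2) := by
  induction hz using Submodule.span_induction with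
  | mem x hx =>
    obtain ⟨m, hm, hx⟩ := hx
    obtain ⟨a, ha, b, hb, h⟩ := biv_mul Q hC (y := (extE Q).symm x) (m := m) (by simpa using hx)
    rw [h, LinearEquiv.apply_symm_apply]
    exact add_mem (add_mem (lowS_of_mem (by omega) (mul_memE (bivS_memE hC) hx))
      (lowS_of_mem (by omega) ha)) (lowS_of_mem (by omega) hb)
  | zero => simp
  | add x y _ _ hx hy => rw [map_add, mul_add, map_add]; exact add_mem hx hy
  | smul a x _ hx => rw [map_smul, mul_smul_comm, map_smul]; exact Submodule.smul_mem _ _ hx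

theorem extE_pow (Q : QuadraticForm K M) {C : CliffordAlgebra Q} (hC : C ∈ bivS Q) (j : ℕ) :
    extE Q (C ^ j) - extE Q C ^ j ∈ lowS K M (2 * j) := by
  induction j with
  | zero => simp [extE_one]
  | succ j ih =>
    have hc := bivS_memE hC
    have h1 := biv_mul_lowS Q hC ih
    obtain ⟨a, ha, b, hb, h⟩ := biv_mul Q hC (y := (extE Q).symm (extE Q C ^ j)) (m := 2 * j)
      (by simpa using pow_memE hc j)
    rw [map_sub, mul_sub, map_sub, h, LinearEquiv.symm_apply_apply,
      LinearEquiv.apply_symm_apply, ← pow_succ', ← pow_succ'] at h1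
    have : extE Q (C ^ (j + 1)) - extE Q C ^ (j + 1) =
      (extE Q (C ^ (j + 1)) - (extE Q C ^ (j + 1) + a + b)) + a + b := by abel
    rw [this]
    exact add_mem (add_mem h1 (lowS_of_mem (by omega) ha)) (lowS_of_mem (by omega) hb)

theorem extE_Wj (Q : QuadraticForm K M) {C : CliffordAlgebra Q} (hC : C ∈ bivS Q) (j : ℕ) :
    extE Q (Wj Q C j) = (j.factorial : K)⁻¹ • extE Q C ^ j := by
  have h := prE_lowS (extE_pow Q hC j) le_rfl
  rw [map_sub, prE_of_mem (pow_memE (bivS_memE hC) j), sub_eq_zero] at h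
  rw [Wj, map_smul, extE_gradeProj, h]

theorem extE_Wj_mem (Q : QuadraticForm K M) {C : CliffordAlgebra Q} (hC : C ∈ bivS Q) (j : ℕ) :
    extE Q (Wj Q C j) ∈ ⋀[K]^(2 * j) M := by
  rw [extE_Wj Q hC]
  exact Submodule.smul_mem _ _ (pow_memE (bivS_memE hC) j)

theorem Wj_neg (Q : QuadraticForm K M) (C : CliffordAlgebra Q) (j : ℕ) :
    Wj Q (-C) j = (-1 : K) ^ j • Wj Q C j := by
  have : (-C) ^ j = (-1 : K) ^ j • C ^ j := by
    rw [← smul_pow, neg_one_smul]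
  rw [Wj, this, gradeProj_eq, map_smul, ← gradeProj_eq, smul_comm, Wj]

/-- contraction of a bivector via the commutator -/
theorem conE_biv (Q : QuadraticForm K M) {C : CliffordAlgebra Q} (hC : C ∈ bivS Q) (v : M) :
    conE (dualV Q v) (extE Q C) = - extE Q (cprod C (ι Q v)) := by
  induction hC using Submodule.span_induction with
  | mem x hx =>
    obtain ⟨u, w, rfl⟩ := hx
    have hp : ∀ a b : M, ι Q a * ι Q b = (2 * vdot Q a b) • (1 : CliffordAlgebra Q)
        - ι Q b * ι Q a := by
      intro a b
      rw [eq_sub_iff_add_eq, ι_mul_ι_add_swap, Algebra.algebraMap_eq_smul_one]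
      congr 1
      simp [vdot]
    have h1 : ∀ u w : M, ι Q u * ι Q w * ι Q v - ι Q v * (ι Q u * ι Q w)
        = (2 * vdot Q v w) • ι Q u - (2 * vdot Q v u) • ι Q w := by
      intro u w
      rw [← mul_assoc, hp v u, sub_mul, mul_assoc (ι Q u) (ι Q v), hp v w, mul_sub,
        mul_assoc]
      simp only [smul_mul_assoc, mul_smul_comm, one_mul, mul_one]
      abel
    have h2 : (ι Q u * ι Q w - ι Q w * ι Q u) * ι Q v - ι Q v * (ι Q u * ι Q w - ι Q w * ι Q u)
        = (4 * vdot Q v w) • ι Q u - (4 * vdot Q v u) • ι Q w := by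
      rw [sub_mul, mul_sub, sub_sub_sub_comm, h1, h1]
      module
    rw [extE_comm, map_smul, conE_ι_mul, conE_ι, cprod, h2, dualV_apply, dualV_apply]
    simp only [map_smul, map_sub, extE_ι, Algebra.algebraMap_eq_smul_one, mul_smul_comm, mul_one]
    module
  | zero => simp [cprod]
  | add x y _ _ hx hy =>
    have : cprod (x + y) (ι Q v) = cprod x (ι Q v) + cprod y (ι Q v) := by
      simp only [cprod, add_mul, mul_add, ← smul_add]; congr 1; abel
    rw [this, map_add, map_add, hx, hy, map_add]; abel
  | smul a x _ hx =>
    have : cprod (a • x) (ι Q v) = a • cprod x (ι Q v) := by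
      simp only [cprod, smul_mul_assoc, mul_smul_comm, ← smul_sub]; rw [smul_comm]
    rw [this, map_smul, map_smul, hx, map_smul, smul_neg]

theorem memE_eq_zero [Module.Finite K M] {l : ℕ} (h : Module.finrank K M < l)
    {x : ExteriorAlgebra K M} (hx : x ∈ ⋀[K]^l M) : x = 0 := by
  have h0 : Module.finrank K (⋀[K]^l M) = 0 := by
    rw [exteriorPower.finrank_eq, Nat.choose_eq_zero_of_lt h]
  have := Module.finrank_zero_iff.mp h0
  exact congrArg Subtype.val (Subsingleton.elim (⟨x, hx⟩ : ⋀[K]^l M) 0)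

theorem ι_mul_outerExp [Module.Finite K M] (Q : QuadraticForm K M) {C : CliffordAlgebra Q}
    (hC : C ∈ bivS Q) (v : M) (hv : cprod C (ι Q v) = ι Q v) {N : ℕ}
    (hN : Module.finrank K M ≤ N) : ι Q v * outerExp Q N C = 0 := by
  have hc := bivS_memE hC
  have hcv : conE (dualV Q v) (extE Q C) = - ExteriorAlgebra.ι K v := by
    rw [conE_biv Q hC, hv, extE_ι]
  have key : ∀ n, extE Q (ι Q v * outerExp Q n C)
      = ExteriorAlgebra.ι K v * ((n.factorial : K)⁻¹ • extE Q C ^ n) := by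
    intro n
    induction n with
    | zero =>
      simp only [outerExp, zero_add, Finset.sum_range_one]
      rw [extE_ι_mul, extE_Wj Q hC]
      simp [conE_one]
    | succ n ih =>
      rw [outerExp, Finset.sum_range_succ, mul_add, map_add]
      rw [outerExp] at ih
      rw [ih, extE_ι_mul, extE_Wj Q hC, map_smul, conE_pow _ v hc hcv, smul_smul]
      have : ((n + 1).factorial : K)⁻¹ * -((n + 1 : ℕ) : K) = -(n.factorial : K)⁻¹ := by
        rw [Nat.factorial_succ]
        have h1 : ((n + 1 : ℕ) : K) ≠ 0 := by exact_mod_cast Nat.succ_ne_zero n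
        have h2 : (n.factorial : K) ≠ 0 := by exact_mod_cast Nat.factorial_ne_zero n
        push_cast at h1 ⊢
        field_simp
      rw [this, mul_smul_comm, neg_smul]
      abel
  apply (extE Q).injective
  rw [key, map_zero]
  apply memE_eq_zero (l := 2 * N + 1) (by omega)
  exact ι_mul_memE v (Submodule.smul_mem _ _ (pow_memE hc N))

theorem si_general [Module.Finite K M] (Q : QuadraticForm K M) {C : CliffordAlgebra Q}
    (hC : C ∈ bivS Q) (vp vm : M) (hp : cprod C (ι Q vp) = ι Q vp)
    (hm : cprod C (ι Q vm) = - ι Q vm) (hd : vdot Q vp vm ≠ 0) (β : CliffordAlgebra Q)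
    (hβ : β = (vdot Q vp vm)⁻¹ • gradeProj Q 2 (ι Q vp * ι Q vm)) {N : ℕ}
    (hN : Module.finrank K M ≤ N) :
    siW Q N C = β * coW Q N C := by
  have h1 := ι_mul_outerExp Q hC vp hp hN
  have hm' : cprod (-C) (ι Q vm) = ι Q vm := by
    have : cprod (-C) (ι Q vm) = - cprod C (ι Q vm) := by
      simp only [cprod, neg_mul, mul_neg, ← smul_neg]; congr 1; abel
    rw [this, hm, neg_neg]
  have h2 := ι_mul_outerExp Q (neg_mem hC) vm hm' hN
  have hg : gradeProj Q 2 (ι Q vp * ι Q vm) = ι Q vp * ι Q vm - algebraMap K _ (vdot Q vp vm) := by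
    apply (extE Q).injective
    rw [extE_gradeProj, map_sub, extE_ι_mul_ι, extE_algebraMap, map_add,
      prE_of_mem (wedge_memE vp vm), prE_of_mem_ne (algebraMap_memE _) (by norm_num)]
    abel
  have hsw : ι Q vp * ι Q vm = (2 * vdot Q vp vm) • (1 : CliffordAlgebra Q)
      - ι Q vm * ι Q vp := by
    rw [eq_sub_iff_add_eq, ι_mul_ι_add_swap, Algebra.algebraMap_eq_smul_one]
    congr 1
    simp [vdot]
  have hb2 : β = (vdot Q vp vm)⁻¹ • (ι Q vp * ι Q vm) - 1 := by
    rw [hβ, hg, Algebra.algebraMap_eq_smul_one, smul_sub, smul_smul, inv_mul_cancel₀ hd, one_smul]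
  have hb1 : β = 1 - (vdot Q vp vm)⁻¹ • (ι Q vm * ι Q vp) := by
    rw [hb2, hsw, smul_sub, smul_smul,
      show (vdot Q vp vm)⁻¹ * (2 * vdot Q vp vm) = 2 by field_simp, two_smul]
    abel
  have e1 : β * outerExp Q N C = outerExp Q N C := by
    rw [hb1, sub_mul, one_mul, smul_mul_assoc, mul_assoc, h1, mul_zero, smul_zero, sub_zero]
  have e2 : β * outerExp Q N (-C) = - outerExp Q N (-C) := by
    rw [hb2, sub_mul, one_mul, smul_mul_assoc, mul_assoc, h2, mul_zero, smul_zero, zero_sub]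
  rw [siW, coW, mul_smul_comm, mul_add, e1, e2, sub_eq_add_neg]

theorem gradeProj_biv_mul_zero (Q : QuadraticForm K M) {C D : CliffordAlgebra Q}
    (hC : C ∈ bivS Q) (hD : D ∈ bivS Q) {i l : ℕ} (h1 : 2 * i + 2 ≠ l) (h2 : 2 * i ≠ l)
    (h3 : 2 * i - 2 ≠ l) : gradeProj Q l (D * Wj Q C i) = 0 := by
  have hw := extE_Wj_mem Q hC i
  obtain ⟨a, ha, b, hb, h⟩ := biv_mul Q hD hw
  apply (extE Q).injective
  rw [extE_gradeProj, h, map_add, map_add, map_zero, prE_of_mem_ne ha h2, prE_of_mem_ne hb h3,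
    prE_of_mem_ne (mul_memE (bivS_memE hD) hw) (by omega)]
  simp

theorem gradeProj_Wj (Q : QuadraticForm K M) {C : CliffordAlgebra Q}
    (hC : C ∈ bivS Q) (i l : ℕ) :
    gradeProj Q l (Wj Q C i) = if 2 * i = l then Wj Q C i else 0 := by
  have hw := extE_Wj_mem Q hC i
  apply (extE Q).injective
  rw [extE_gradeProj]
  split_ifs with h
  · subst h; exact prE_of_mem hw
  · rw [prE_of_mem_ne hw h, map_zero]

theorem gradeProj_add (Q : QuadraticForm K M) (l : ℕ) (x y : CliffordAlgebra Q) :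
    gradeProj Q l (x + y) = gradeProj Q l x + gradeProj Q l y := by
  simp only [gradeProj_eq, map_add]

theorem gradeProj_smul (Q : QuadraticForm K M) (l : ℕ) (a : K) (x : CliffordAlgebra Q) :
    gradeProj Q l (a • x) = a • gradeProj Q l x := by
  simp only [gradeProj_eq, map_smul]

theorem gradeProj_sum (Q : QuadraticForm K M) (l : ℕ) (s : Finset ℕ) (f : ℕ → CliffordAlgebra Q) :
    gradeProj Q l (∑ i ∈ s, f i) = ∑ i ∈ s, gradeProj Q l (f i) := by
  simp only [gradeProj_eq, map_sum]

theorem siW_eq (Q : QuadraticForm K M) (N : ℕ) (C : CliffordAlgebra Q) :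
    siW Q N C = ∑ i ∈ Finset.range (N + 1), (if Even i then (0 : K) else 1) • Wj Q C i := by
  rw [siW, outerExp, outerExp, ← Finset.sum_sub_distrib, Finset.smul_sum]
  refine Finset.sum_congr rfl fun i _ => ?_
  rw [Wj_neg]
  split_ifs with h
  · rw [h.neg_one_pow]; simp
  · rw [(Nat.not_even_iff_odd.mp h).neg_one_pow]; module

theorem coW_eq (Q : QuadraticForm K M) (N : ℕ) (C : CliffordAlgebra Q) :
    coW Q N C = ∑ i ∈ Finset.range (N + 1), (if Even i then (1 : K) else 0) • Wj Q C i := by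
  rw [coW, outerExp, outerExp, ← Finset.sum_add_distrib, Finset.smul_sum]
  refine Finset.sum_congr rfl fun i _ => ?_
  rw [Wj_neg]
  split_ifs with h
  · rw [h.neg_one_pow]; module
  · rw [(Nat.not_even_iff_odd.mp h).neg_one_pow]; simp

theorem Wj_odd (Q : QuadraticForm K M) {C β : CliffordAlgebra Q}
    (hC : C ∈ bivS Q) (hβ : β ∈ bivS Q) (j N : ℕ) (hN : 2 * j + 2 ≤ N)
    (h : siW Q N C = β * coW Q N C) :
    Wj Q C (2 * j + 1) = gradeProj Q (4 * j + 2) (β * Wj Q C (2 * j))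
      + gradeProj Q (4 * j + 2) (β * Wj Q C (2 * j + 2)) := by
  have h' := congrArg (gradeProj Q (4 * j + 2)) h
  rw [siW_eq, coW_eq, Finset.mul_sum, gradeProj_sum, gradeProj_sum] at h'
  have hl : ∑ i ∈ Finset.range (N + 1),
      gradeProj Q (4 * j + 2) ((if Even i then (0 : K) else 1) • Wj Q C i)
      = Wj Q C (2 * j + 1) := by
    rw [Finset.sum_eq_single (2 * j + 1)]
    · rw [if_neg (by simp), one_smul, gradeProj_Wj Q hC, if_pos (by ring)]
    · intro i _ hi
      have hne : ¬ 2 * i = 4 * j + 2 := by omega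
      rw [gradeProj_smul, gradeProj_Wj Q hC, if_neg hne, smul_zero]
    · intro hi
      exact absurd (Finset.mem_range.mpr (by omega)) hi
  rw [hl] at h'
  rw [h', ← Finset.sum_subset (s₁ := {2 * j, 2 * j + 2})]
  · rw [Finset.sum_pair (by omega), if_pos (by simp), if_pos (by simp [Nat.even_add]), one_smul,
      one_smul]
  · intro i hi
    simp only [Finset.mem_insert, Finset.mem_singleton] at hi
    rw [Finset.mem_range]
    omega
  · intro i _ hi
    simp only [Finset.mem_insert, Finset.mem_singleton, not_or] at hi
    rw [mul_smul_comm, gradeProj_smul]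
    split_ifs with he
    · obtain ⟨t, rfl⟩ := he
      rw [gradeProj_biv_mul_zero Q hC hβ (by omega) (by omega) (by omega), smul_zero]
    · rw [zero_smul]

end helpers

open CliffordAlgebra TensorProduct in
/-- let `μ ≠ 0` be an eigenvalue of `B` with paired eigenvectors `v₊, v₋`
(eigenvalues `±μ`, `v₊ · v₋ ≠ 0`), set `B_μ := B/μ` and `β_μ := (v₊ ∧ v₋)/(v₊ · v₋)`.
Then for all indices `j`, the wedge powers `W_i` of `B_μ` satisfy
`W_{2j+1} = ⟨β_μ (W_{2j} + W_{2j+2})⟩_{4j+2} = β_μ ∧ W_{2j} + β_μ · W_{2j+2}`;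
consequently `si∧(B_μ) = β_μ co∧(B_μ)`. -/
theorem si_eq_beta_mul_co (p q r : ℕ) (B : CliffordAlgebra (sigQ p q r))
    (hB : IsGrade (sigQ p q r) 2 B) (k : ℕ) (hk : HasEffDim (sigQ p q r) B k)
    (μ : ℂ) (hμ : μ ≠ 0)
    (hroot : Mpoly (sigQc p q r) (toC p q r B) k μ
        * reverse (Mpoly (sigQc p q r) (toC p q r B) k μ) = 0)
    (vp vm : ℂ ⊗[ℝ] (Fin (p + q + r) → ℝ))
    (hvp : IsEigen (sigQc p q r) (toC p q r B) μ vp)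
    (hvm : IsEigen (sigQc p q r) (toC p q r B) (-μ) vm)
    (hd : vdot (sigQc p q r) vp vm ≠ 0)
    (Bμ : CliffordAlgebra (sigQc p q r)) (hBμ : Bμ = μ⁻¹ • toC p q r B)
    (β : CliffordAlgebra (sigQc p q r))
    (hβ : β = (vdot (sigQc p q r) vp vm)⁻¹ •
      gradeProj (sigQc p q r) 2 (ι (sigQc p q r) vp * ι (sigQc p q r) vm)) :
    (∀ j : ℕ,
      Wj (sigQc p q r) Bμ (2 * j + 1)
        = gradeProj (sigQc p q r) (4 * j + 2)
            (β * (Wj (sigQc p q r) Bμ (2 * j) + Wj (sigQc p q r) Bμ (2 * j + 2))) ∧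
      Wj (sigQc p q r) Bμ (2 * j + 1)
        = gradeProj (sigQc p q r) (4 * j + 2) (β * Wj (sigQc p q r) Bμ (2 * j))
          + gradeProj (sigQc p q r) (4 * j + 2) (β * Wj (sigQc p q r) Bμ (2 * j + 2))) ∧
    siW (sigQc p q r) (p + q + r) Bμ = β * coW (sigQc p q r) (p + q + r) Bμ := by
  have hT := toC_mem (isGrade_two_mem hB)
  have hC : Bμ ∈ bivS (sigQc p q r) := hBμ ▸ Submodule.smul_mem _ _ hT
  have hcp : ∀ v, cprod Bμ (ι (sigQc p q r) v) = μ⁻¹ • cprod (toC p q r B) (ι (sigQc p q r) v) := by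
    intro v
    rw [hBμ]
    simp only [cprod, smul_mul_assoc, mul_smul_comm, ← smul_sub]
    rw [smul_comm]
  have hp : cprod Bμ (ι (sigQc p q r) vp) = ι (sigQc p q r) vp := by
    rw [hcp, hvp.2, smul_smul, inv_mul_cancel₀ hμ, one_smul]
  have hm : cprod Bμ (ι (sigQc p q r) vm) = - ι (sigQc p q r) vm := by
    rw [hcp, hvm.2, smul_smul, mul_neg, inv_mul_cancel₀ hμ, neg_one_smul]
  have hβm : β ∈ bivS (sigQc p q r) := by
    rw [hβ]
    exact Submodule.smul_mem _ _ (mem_bivS_of_extE _ (prE_mem 2 _))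
  have hfin : Module.finrank ℂ (ℂ ⊗[ℝ] (Fin (p + q + r) → ℝ)) = p + q + r := by
    rw [Module.finrank_baseChange, Module.finrank_fin_fun]
  have hsi : ∀ N, p + q + r ≤ N → siW (sigQc p q r) N Bμ = β * coW (sigQc p q r) N Bμ :=
    fun N hN => si_general _ hC vp vm hp hm hd β hβ (by rw [hfin]; exact hN)
  have hW := fun j => Wj_odd _ hC hβm j (p + q + r + (2 * j + 2)) (by omega) (hsi _ (by omega))
  refine ⟨fun j => ⟨?_, hW j⟩, hsi _ le_rfl⟩
  rw [mul_add, gradeProj_add]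
  exact hW j
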